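/- arXiv:2406.11506 — 3 statements merged into one kernel-verified Lean document; each statement's English description precedes it below -/
import Mathlib

section
/- Let f : ℝⁿ × ℝᵐ → ℝⁿ be differentiable, P, Q symmetric positive definite n×n real matrices, R a symmetric positive definite m×m real matrix, and K ∈ ℝ^{m×n}. Let x, x^r ∈ ℝⁿ, u^r ∈ ℝᵐ, set δ := x − x^r, u := u^r + Kδ, and z(s) := (x^r + sδ, u^r + sKδ). Suppose that for every s ∈ [0,1], P(A(z(s)) + B(z(s))K) + (A(z(s)) + B(z(s))K)ᵀP ⪯ −(Q + KᵀRK). Then 2δᵀP(f(x,u) − f(x^r,u^r)) ≤ −δᵀ(Q + KᵀRK)δ. -/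
open Matrix

/-- The Jacobian matrix of `f : ℝⁿ × ℝᵐ → ℝⁿ` with respect to its first
(state) argument, evaluated at `z`. -/
noncomputable def jacAmat {n m : ℕ} (f : ((Fin n → ℝ) × (Fin m → ℝ)) → (Fin n → ℝ))
    (z : (Fin n → ℝ) × (Fin m → ℝ)) : Matrix (Fin n) (Fin n) ℝ :=
  LinearMap.toMatrix' (fderiv ℝ (fun x => f (x, z.2)) z.1 : (Fin n → ℝ) →ₗ[ℝ] (Fin n → ℝ))

/-- The Jacobian matrix of `f : ℝⁿ × ℝᵐ → ℝⁿ` with respect to its second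
(input) argument, evaluated at `z`. -/
noncomputable def jacBmat {n m : ℕ} (f : ((Fin n → ℝ) × (Fin m → ℝ)) → (Fin n → ℝ))
    (z : (Fin n → ℝ) × (Fin m → ℝ)) : Matrix (Fin n) (Fin m) ℝ :=
  LinearMap.toMatrix' (fderiv ℝ (fun u => f (z.1, u)) z.2 : (Fin m → ℝ) →ₗ[ℝ] (Fin n → ℝ))

/-- `M ⪯ N` for symmetric real matrices: `N - M` is positive semidefinite. -/
def matLE {n : ℕ} (M N : Matrix (Fin n) (Fin n) ℝ) : Prop := (N - M).PosSemidef

theorem jacAmat_mulVec {n m : ℕ} {f : ((Fin n → ℝ) × (Fin m → ℝ)) → (Fin n → ℝ)}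
    {z : (Fin n → ℝ) × (Fin m → ℝ)} (hf : DifferentiableAt ℝ f z) (v : Fin n → ℝ) :
    jacAmat f z *ᵥ v = fderiv ℝ f z (v, 0) := by
  have h : HasFDerivAt (fun x => f (x, z.2)) _ z.1 :=
    HasFDerivAt.comp (g := f) z.1 hf.hasFDerivAt (hasFDerivAt_prodMk_left z.1 z.2)
  rw [jacAmat, h.fderiv, LinearMap.toMatrix'_mulVec]
  simp

theorem jacBmat_mulVec {n m : ℕ} {f : ((Fin n → ℝ) × (Fin m → ℝ)) → (Fin n → ℝ)}
    {z : (Fin n → ℝ) × (Fin m → ℝ)} (hf : DifferentiableAt ℝ f z) (w : Fin m → ℝ) :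
    jacBmat f z *ᵥ w = fderiv ℝ f z (0, w) := by
  have h : HasFDerivAt (fun u => f (z.1, u)) _ z.2 :=
    HasFDerivAt.comp (g := f) z.2 hf.hasFDerivAt (hasFDerivAt_prodMk_right z.1 z.2)
  rw [jacBmat, h.fderiv, LinearMap.toMatrix'_mulVec]
  simp

/-- The closed-loop Jacobian `A + BK` is the derivative of `f` along the graph of `K`. -/
theorem jacAmat_add_jacBmat_mul_mulVec {n m : ℕ}
    {f : ((Fin n → ℝ) × (Fin m → ℝ)) → (Fin n → ℝ)} {z : (Fin n → ℝ) × (Fin m → ℝ)}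
    (hf : DifferentiableAt ℝ f z) (K : Matrix (Fin m) (Fin n) ℝ) (v : Fin n → ℝ) :
    (jacAmat f z + jacBmat f z * K) *ᵥ v = fderiv ℝ f z (v, K *ᵥ v) := by
  rw [add_mulVec, ← mulVec_mulVec, jacAmat_mulVec hf, jacBmat_mulVec hf, ← map_add]
  simp

theorem dotProduct_mul_add_transpose_mul_mulVec {n : ℕ} {P : Matrix (Fin n) (Fin n) ℝ}
    (hP : P.IsSymm) (M : Matrix (Fin n) (Fin n) ℝ) (v : Fin n → ℝ) :
    v ⬝ᵥ (P * M + Mᵀ * P) *ᵥ v = 2 * (v ⬝ᵥ P *ᵥ (M *ᵥ v)) := by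
  have h : v ⬝ᵥ (Mᵀ * P) *ᵥ v = v ⬝ᵥ (P * M) *ᵥ v := by
    rw [← dotProduct_transpose_mulVec, transpose_mul, transpose_transpose, hP.eq]
  rw [add_mulVec, dotProduct_add, h, mulVec_mulVec, two_mul]

theorem matLE.dotProduct_mulVec_le {n : ℕ} {M N : Matrix (Fin n) (Fin n) ℝ} (h : matLE M N)
    (v : Fin n → ℝ) : v ⬝ᵥ M *ᵥ v ≤ v ⬝ᵥ N *ᵥ v := by
  have := PosSemidef.dotProduct_mulVec_nonneg h v
  rwa [star_trivial, sub_mulVec, dotProduct_sub, sub_nonneg] at this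

/-- if along the segment `z(s) = (x^r + s δ, u^r + s K δ)` one has
`P(A + BK) + (A + BK)ᵀP ⪯ -(Q + KᵀRK)`, then
`2 δᵀ P (f(x,u) - f(x^r,u^r)) ≤ -δᵀ (Q + KᵀRK) δ` with `u = u^r + K δ`. -/
theorem stmt4 {n m : ℕ} (f : ((Fin n → ℝ) × (Fin m → ℝ)) → (Fin n → ℝ))
    (hf : Differentiable ℝ f)
    (P Q : Matrix (Fin n) (Fin n) ℝ) (hP : P.PosDef) (hQ : Q.PosDef)
    (R : Matrix (Fin m) (Fin m) ℝ) (hR : R.PosDef)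
    (K : Matrix (Fin m) (Fin n) ℝ) (x xr : Fin n → ℝ) (ur : Fin m → ℝ)
    (hLMI : ∀ s ∈ Set.Icc (0 : ℝ) 1,
      matLE
        (P * (jacAmat f (xr + s • (x - xr), ur + s • K.mulVec (x - xr)) +
              jacBmat f (xr + s • (x - xr), ur + s • K.mulVec (x - xr)) * K) +
         (jacAmat f (xr + s • (x - xr), ur + s • K.mulVec (x - xr)) +
          jacBmat f (xr + s • (x - xr), ur + s • K.mulVec (x - xr)) * K)ᵀ * P)
        (-(Q + Kᵀ * R * K))) :
    2 * ((x - xr) ⬝ᵥ P.mulVec (f (x, ur + K.mulVec (x - xr)) - f (xr, ur))) ≤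
      -((x - xr) ⬝ᵥ (Q + Kᵀ * R * K).mulVec (x - xr)) := by
  set δ := x - xr with hδ
  let z : ℝ → (Fin n → ℝ) × (Fin m → ℝ) := fun s => (xr + s • δ, ur + s • K *ᵥ δ)
  have hz (s : ℝ) : HasDerivAt z (δ, K *ᵥ δ) s := by
    have h1 := ((hasDerivAt_id s).smul_const δ).const_add xr
    have h2 := ((hasDerivAt_id s).smul_const (K *ᵥ δ)).const_add ur
    simpa using h1.prodMk h2
  let L : (Fin n → ℝ) →L[ℝ] ℝ :=
    LinearMap.toContinuousLinearMap (dotProductBilin ℝ ℝ δ ∘ₗ P.mulVecLin)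
  have hL (y : Fin n → ℝ) : L y = δ ⬝ᵥ P *ᵥ y := rfl
  have hφ (s : ℝ) : HasDerivAt (fun s => L (f (z s))) (L (fderiv ℝ f (z s) (δ, K *ᵥ δ))) s :=
    L.hasFDerivAt.comp_hasDerivAt s ((hf (z s)).hasFDerivAt.comp_hasDerivAt s (hz s))
  obtain ⟨s, hs, hmean⟩ := exists_hasDerivAt_eq_slope _ _ zero_lt_one
    (fun s _ => (hφ s).continuousAt.continuousWithinAt) (fun s _ => hφ s)
  have hz0 : z 0 = (xr, ur) := by simp [z]
  have hz1 : z 1 = (x, ur + K *ᵥ δ) := by simp [z, hδ]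
  have hPs : P.IsSymm := isHermitian_iff_isSymm.mp hP.isHermitian
  have hle := (hLMI s (Set.Ioo_subset_Icc_self hs)).dotProduct_mulVec_le δ
  rw [dotProduct_mul_add_transpose_mul_mulVec hPs, jacAmat_add_jacBmat_mul_mulVec (hf _),
    neg_mulVec, dotProduct_neg] at hle
  rw [sub_zero, div_one, hz0, hz1, ← map_sub, hL, hL] at hmean
  rwa [← hmean]
end

section
/- Let f : ℝⁿ × ℝᵐ → ℝⁿ be continuously differentiable, P, Q symmetric positive definite n×n real matrices, R symmetric positive definite m×m, K ∈ ℝ^{m×n}, and I ⊆ ℝ an interval. Let x^r : I → ℝⁿ be differentiable and u^r : I → ℝᵐ be such that (d/dt)x^r(t) = f(x^r(t), u^r(t)) for all t ∈ I, and let x : I → ℝⁿ be differentiable with (d/dt)x(t) = f(x(t), u^r(t) + K(x(t) − x^r(t))) for all t ∈ I. Set δ(t) := x(t) − x^r(t), and suppose that for every t ∈ I and every s ∈ [0,1], at z := (x^r(t) + sδ(t), u^r(t) + sKδ(t)) one has P(A(z) + B(z)K) + (A(z) + B(z)K)ᵀP ⪯ −(Q + KᵀRK). Then V(t) := δ(t)ᵀPδ(t)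 is differentiable on I and satisfies V'(t) ≤ −δ(t)ᵀ(Q + KᵀRK)δ(t) for all t ∈ I. -/
open Matrix

/-- Along a direction `(v, w)`, the full derivative of `f` is given by the partial Jacobians. -/
theorem fderiv_apply_eq_jacAmat_add_jacBmat {n m : ℕ}
    {f : ((Fin n → ℝ) × (Fin m → ℝ)) → (Fin n → ℝ)} {z : (Fin n → ℝ) × (Fin m → ℝ)}
    (hf : DifferentiableAt ℝ f z) (v : Fin n → ℝ) (w : Fin m → ℝ) :
    fderiv ℝ f z (v, w) = jacAmat f z *ᵥ v + jacBmat f z *ᵥ w := by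
  have hA : HasFDerivAt (fun x => f (x, z.2))
      ((fderiv ℝ f z).comp (ContinuousLinearMap.inl ℝ (Fin n → ℝ) (Fin m → ℝ))) z.1 :=
    HasFDerivAt.comp z.1 (g := f) hf.hasFDerivAt (hasFDerivAt_prodMk_left z.1 z.2)
  have hB : HasFDerivAt (fun u => f (z.1, u))
      ((fderiv ℝ f z).comp (ContinuousLinearMap.inr ℝ (Fin n → ℝ) (Fin m → ℝ))) z.2 :=
    HasFDerivAt.comp z.2 (g := f) hf.hasFDerivAt (hasFDerivAt_prodMk_right z.1 z.2)
  rw [jacAmat, jacBmat, hA.fderiv, hB.fderiv, LinearMap.toMatrix'_mulVec,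
    LinearMap.toMatrix'_mulVec]
  simp [← map_add]

/-- For symmetric `P`, the quadratic form of `P M + Mᵀ P` at `v` is `2 vᵀ P M v`. -/
theorem dotProduct_lyapunov_mulVec {n : ℕ} {P : Matrix (Fin n) (Fin n) ℝ} (hP : Pᵀ = P)
    (M : Matrix (Fin n) (Fin n) ℝ) (v : Fin n → ℝ) :
    v ⬝ᵥ (P * M + Mᵀ * P) *ᵥ v = 2 * (v ⬝ᵥ P *ᵥ (M *ᵥ v)) := by
  have h : v ⬝ᵥ (Mᵀ * P) *ᵥ v = v ⬝ᵥ (P * M) *ᵥ v := by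
    rw [← dotProduct_transpose_mulVec, transpose_mul, transpose_transpose, hP]
  rw [add_mulVec, dotProduct_add, h, mulVec_mulVec]
  ring

/-- Derivative of a quadratic form with symmetric matrix along a differentiable curve. -/
theorem HasDerivAt.dotProduct_mulVec_self {n : ℕ} {P : Matrix (Fin n) (Fin n) ℝ} (hP : Pᵀ = P)
    {y : ℝ → Fin n → ℝ} {y' : Fin n → ℝ} {t : ℝ} (hy : HasDerivAt y y' t) :
    HasDerivAt (fun τ => y τ ⬝ᵥ P *ᵥ y τ) (2 * (y t ⬝ᵥ P *ᵥ y')) t := by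
  have hPy : HasDerivAt (fun τ => P *ᵥ y τ) (P *ᵥ y') t :=
    (LinearMap.toContinuousLinearMap P.mulVecLin).hasFDerivAt.comp_hasDerivAt t hy
  have h := HasDerivAt.fun_sum (u := Finset.univ) fun i _ =>
    (hasDerivAt_pi.1 hy i).mul (hasDerivAt_pi.1 hPy i)
  refine h.congr_deriv ?_
  have hsymm : y' ⬝ᵥ P *ᵥ y t = y t ⬝ᵥ P *ᵥ y' := by
    rw [← dotProduct_transpose_mulVec, hP]
  rw [Finset.sum_add_distrib]
  change y' ⬝ᵥ P *ᵥ y t + y t ⬝ᵥ P *ᵥ y' = _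
  rw [hsymm]
  ring

/-- along the closed-loop system under the terminal feedback law,
the incremental Lyapunov function `V(t) = δ(t)ᵀ P δ(t)` (with `δ = x - x^r`) is
differentiable on the interval `I` and satisfies
`V'(t) ≤ -δ(t)ᵀ (Q + KᵀRK) δ(t)`, provided the LMI holds along the segments
`z = (x^r(t) + s δ(t), u^r(t) + s K δ(t))`, `s ∈ [0,1]`. -/
theorem stmt8 {n m : ℕ} (f : ((Fin n → ℝ) × (Fin m → ℝ)) → (Fin n → ℝ))
    (hf : ContDiff ℝ 1 f)
    (P Q : Matrix (Fin n) (Fin n) ℝ) (hP : P.PosDef) (hQ : Q.PosDef)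
    (R : Matrix (Fin m) (Fin m) ℝ) (hR : R.PosDef)
    (K : Matrix (Fin m) (Fin n) ℝ)
    (I : Set ℝ) (hI : I.OrdConnected)
    (xr x : ℝ → Fin n → ℝ) (ur : ℝ → Fin m → ℝ)
    (hxr : ∀ t ∈ I, HasDerivAt xr (f (xr t, ur t)) t)
    (hx : ∀ t ∈ I, HasDerivAt x (f (x t, ur t + K.mulVec (x t - xr t))) t)
    (hLMI : ∀ t ∈ I, ∀ s ∈ Set.Icc (0 : ℝ) 1,
      matLE
        (P * (jacAmat f (xr t + s • (x t - xr t), ur t + s • K.mulVec (x t - xr t)) +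
              jacBmat f (xr t + s • (x t - xr t), ur t + s • K.mulVec (x t - xr t)) * K) +
         (jacAmat f (xr t + s • (x t - xr t), ur t + s • K.mulVec (x t - xr t)) +
          jacBmat f (xr t + s • (x t - xr t), ur t + s • K.mulVec (x t - xr t)) * K)ᵀ * P)
        (-(Q + Kᵀ * R * K))) :
    ∀ t ∈ I, ∃ d : ℝ,
      HasDerivAt (fun τ => (x τ - xr τ) ⬝ᵥ P.mulVec (x τ - xr τ)) d t ∧
      d ≤ -((x t - xr t) ⬝ᵥ (Q + Kᵀ * R * K).mulVec (x t - xr t)) := by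
  intro t ht
  have hPs : Pᵀ = P := by simpa [IsHermitian] using hP.isHermitian
  refine ⟨_, HasDerivAt.dotProduct_mulVec_self hPs ((hx t ht).sub (hxr t ht)), ?_⟩
  have hL := hLMI t ht
  set δ := x t - xr t with hδ
  let z : ℝ → (Fin n → ℝ) × (Fin m → ℝ) := fun s => (xr t + s • δ, ur t + s • K *ᵥ δ)
  let M : ℝ → Matrix (Fin n) (Fin n) ℝ := fun s => jacAmat f (z s) + jacBmat f (z s) * K
  have hfd : Differentiable ℝ f := hf.differentiable one_ne_zero
  have hg (s : ℝ) : HasDerivAt (fun s => δ ⬝ᵥ P *ᵥ f (z s)) (δ ⬝ᵥ P *ᵥ (M s *ᵥ δ)) s := by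
    have hz : HasDerivAt z (δ, K *ᵥ δ) s := by
      refine HasDerivAt.prodMk ?_ ?_
      · simpa using ((hasDerivAt_id s).smul_const δ).const_add (xr t)
      · simpa using ((hasDerivAt_id s).smul_const (K *ᵥ δ)).const_add (ur t)
    have hfz : HasDerivAt (fun s => f (z s)) (M s *ᵥ δ) s := by
      refine ((hfd (z s)).hasFDerivAt.comp_hasDerivAt s hz).congr_deriv ?_
      rw [fderiv_apply_eq_jacAmat_add_jacBmat (hfd (z s)), add_mulVec, mulVec_mulVec]
    exact (LinearMap.toContinuousLinearMap
      (dotProductBilin ℝ ℝ δ ∘ₗ P.mulVecLin)).hasFDerivAt.comp_hasDerivAt s hfz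
  obtain ⟨c, hc, hmean⟩ := exists_hasDerivAt_eq_slope _ _ zero_lt_one
    (fun s _ => (hg s).continuousAt.continuousWithinAt) (fun s _ => hg s)
  have hLc : 0 ≤ δ ⬝ᵥ (-(Q + Kᵀ * R * K) - (P * M c + (M c)ᵀ * P)) *ᵥ δ := by
    simpa only [star_trivial] using
      (hL c (Set.Ioo_subset_Icc_self hc)).dotProduct_mulVec_nonneg δ
  rw [sub_mulVec, dotProduct_sub, dotProduct_lyapunov_mulVec hPs, neg_mulVec, dotProduct_neg,
    hmean] at hLc
  have h0 : z 0 = (xr t, ur t) := by simp [z]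
  have h1 : z 1 = (x t, ur t + K *ᵥ δ) := by simp [z, hδ]
  simp only [h0, h1, sub_zero, div_one] at hLc
  rw [mulVec_sub, dotProduct_sub]
  linarith
end

section
/- Theorem 2 (shift-and-hold candidate, recursive feasibility of the planning MPC). Let f : ℝⁿ × ℝᵐ → ℝⁿ be continuous, let 0 < Tˢ < T, and let Z ⊆ ℝⁿ × ℝᵐ be any set. Let x : [0,T] → ℝⁿ be differentiable and u : [0,T] → ℝᵐ be continuous with (d/dτ)x(τ) = f(x(τ), u(τ)) for all τ ∈ [0,T], (x(τ), u(τ)) ∈ Z for all τ ∈ [0,T], and f(x(T), u(T)) = 0. Define x̃(τ) := x(min(τ + Tˢ, T)) and ũ(τ) := u(min(τ + Tˢ, T)) for τ ∈ [0,T]. Then ũ is continuous, x̃ is differentiable on [0,T] with (d/dτ)x̃(τ) = f(x̃(τ), ũ(τ)) for all τ ∈ [0,T], (x̃(τ), ũ(τ)) ∈ Z for all τ ∈ [0,T], and f(x̃(T), ũ(T)) = 0. -/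
open Matrix

/-- The shifted time, held at `T`, stays in the horizon `[0, T]`. -/
lemma mapsTo_min_add_Icc {s T : ℝ} (hs : 0 ≤ s) (hT : 0 ≤ T) :
    Set.MapsTo (fun τ => min (τ + s) T) (Set.Icc 0 T) (Set.Icc 0 T) :=
  fun _ hτ => ⟨le_min (add_nonneg hτ.1 hs) hT, min_le_right _ _⟩

/-- Shifting a differentiable curve on `[0, T]` and holding its final value shifts and holds
its derivative, provided that the derivative vanishes at `T`. -/
lemma hasDerivWithinAt_comp_min_add {E : Type*} [NormedAddCommGroup E] [NormedSpace ℝ E]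
    {x v : ℝ → E} {s T : ℝ} (hs : 0 ≤ s) (hsT : s ≤ T)
    (hx : ∀ τ ∈ Set.Icc (0 : ℝ) T, HasDerivWithinAt x (v τ) (Set.Icc 0 T) τ)
    (hv : v T = 0) (τ : ℝ) :
    HasDerivWithinAt (fun σ => x (min (σ + s) T)) (v (min (τ + s) T)) (Set.Icc 0 T) τ := by
  have hleft : HasDerivWithinAt (fun σ => x (min (σ + s) T)) (v (min (τ + s) T))
      (Set.Icc 0 (T - s)) τ := by
    by_cases hτ : τ ∈ Set.Icc 0 (T - s)
    · have heq : ∀ σ ∈ Set.Icc 0 (T - s), min (σ + s) T = σ + s :=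
        fun σ hσ => min_eq_left (by linarith [hσ.2])
      have hmaps : Set.MapsTo (· + s) (Set.Icc 0 (T - s)) (Set.Icc 0 T) :=
        fun σ hσ => ⟨add_nonneg hσ.1 hs, by linarith [hσ.2]⟩
      have hshift := (hx (τ + s) (hmaps hτ)).scomp τ
        ((hasDerivWithinAt_id τ _).add_const s) hmaps
      rw [one_smul] at hshift
      rw [heq τ hτ]
      exact hshift.congr_of_mem (fun σ hσ => congrArg x (heq σ hσ)) hτ
    · exact HasFDerivWithinAt.of_notMem_closure (by rwa [isClosed_Icc.closure_eq])
  have hright : HasDerivWithinAt (fun σ => x (min (σ + s) T)) (v (min (τ + s) T))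
      (Set.Icc (T - s) T) τ := by
    by_cases hτ : τ ∈ Set.Icc (T - s) T
    · have heq : ∀ σ ∈ Set.Icc (T - s) T, min (σ + s) T = T :=
        fun σ hσ => min_eq_right (by linarith [hσ.1])
      rw [heq τ hτ, hv]
      exact (hasDerivWithinAt_const τ _ (x T)).congr_of_mem
        (fun σ hσ => congrArg x (heq σ hσ)) hτ
    · exact HasFDerivWithinAt.of_notMem_closure (by rwa [isClosed_Icc.closure_eq])
  rw [← Set.Icc_union_Icc_eq_Icc (sub_nonneg.2 hsT) (sub_le_self T hs)]
  exact hleft.union hright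

/-- Theorem 2 core (shift-and-hold candidate): if `(x, u)`
satisfies the dynamics `ẋ = f(x, u)` on `[0, T]`, stays in `Z`, and ends at a
steady state (`f(x(T), u(T)) = 0`), then the candidate
`x̃(τ) = x(min(τ + Tˢ, T))`, `ũ(τ) = u(min(τ + Tˢ, T))` again satisfies the
dynamics on `[0, T]`, stays in `Z`, and ends at a steady state, with `ũ`
continuous. -/
theorem stmt11 {n m : ℕ} (f : ((Fin n → ℝ) × (Fin m → ℝ)) → (Fin n → ℝ))
    (hf : Continuous f) (Ts T : ℝ) (hTs : 0 < Ts) (hT : Ts < T)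
    (Z : Set ((Fin n → ℝ) × (Fin m → ℝ)))
    (x : ℝ → Fin n → ℝ) (u : ℝ → Fin m → ℝ)
    (hu : ContinuousOn u (Set.Icc 0 T))
    (hx : ∀ τ ∈ Set.Icc (0 : ℝ) T,
      HasDerivWithinAt x (f (x τ, u τ)) (Set.Icc 0 T) τ)
    (hZ : ∀ τ ∈ Set.Icc (0 : ℝ) T, (x τ, u τ) ∈ Z)
    (hterm : f (x T, u T) = 0) :
    ContinuousOn (fun τ => u (min (τ + Ts) T)) (Set.Icc 0 T) ∧
    (∀ τ ∈ Set.Icc (0 : ℝ) T,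
      HasDerivWithinAt (fun σ => x (min (σ + Ts) T))
        (f (x (min (τ + Ts) T), u (min (τ + Ts) T))) (Set.Icc 0 T) τ) ∧
    (∀ τ ∈ Set.Icc (0 : ℝ) T, (x (min (τ + Ts) T), u (min (τ + Ts) T)) ∈ Z) ∧
    f (x (min (T + Ts) T), u (min (T + Ts) T)) = 0 := by
  have hmaps := mapsTo_min_add_Icc hTs.le (hTs.trans hT).le
  refine ⟨hu.comp (by fun_prop) hmaps, fun τ _ => ?_, fun τ hτ => hZ _ (hmaps hτ), ?_⟩
  · exact hasDerivWithinAt_comp_min_add (v := fun τ => f (x τ, u τ)) hTs.le hT.le hx hterm τ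
  · rwa [min_eq_right (by linarith)]
end
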